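/- If F ≺ (1-z)^μ on the unit disc with 0 < μ ≤ ρ ≤ 1, then F ≺ (1-z)^ρ; consequently for b ≥ max{c, 2c-1} > 0 the subordination (1-z)^ρ σ_n^{(b-1,c)}(f_μ, z) ≺ (1-z)^ρ holds for 0 < μ ≤ ρ ≤ 1. -/

import Mathlib

open Complex Metric

/-- Pochhammer symbol (rising factorial). -/
def poch (x : ℝ) (k : ℕ) : ℝ := ∏ i ∈ Finset.range k, (x + i)

/-- Cesàro normalizing constants `B_0 = 1`, `B_k = ((b)_k/(c)_k)(1+b-c)/b`. -/
noncomputable def cesB (b c : ℝ) : ℕ → ℝ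
  | 0 => 1
  | (k + 1) => (poch b (k + 1) / poch c (k + 1)) * (1 + b - c) / b

/-- `σ_n^{(b-1,c)}(f_μ, z) = Σ_{k=0}^n (B_{n-k}/B_n)((μ)_k/k!) z^k`. -/
noncomputable def sigmaMu (b c μ : ℝ) (n : ℕ) (z : ℂ) : ℂ :=
  ∑ k ∈ Finset.range (n + 1),
    (((cesB b c (n - k) / cesB b c n) * (poch μ k / (Nat.factorial k : ℝ)) : ℝ) : ℂ) * z ^ k

/-- Subordination on the unit disc. -/
def Subord (F G : ℂ → ℂ) : Prop :=
  ∃ ω : ℂ → ℂ, DifferentiableOn ℂ ω (ball (0 : ℂ) 1) ∧ ω 0 = 0 ∧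
    (∀ z ∈ ball (0 : ℂ) 1, ω z ∈ ball (0 : ℂ) 1) ∧
    ∀ z ∈ ball (0 : ℂ) 1, F z = G (ω z)

def DD : Set ℂ := {w | |w.im| < Real.pi / 2 ∧ Real.exp w.re < 2 * Real.cos w.im}

lemma cos_concave2 {a b s t : ℝ} (ha : |a| < Real.pi / 2) (hb : |b| < Real.pi / 2)
    (hs : 0 ≤ s) (ht : 0 ≤ t) (hst : s + t = 1) :
    s * Real.cos a + t * Real.cos b ≤ Real.cos (s * a + t * b) := by
  have h := strictConcaveOn_cos_Icc.concaveOn.2 (x := a) (y := b)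
    ⟨by linarith [(abs_lt.1 ha).1], (abs_lt.1 ha).2.le⟩
    ⟨by linarith [(abs_lt.1 hb).1], (abs_lt.1 hb).2.le⟩ hs ht hst
  simpa using h

lemma DD_convex : Convex ℝ DD := by
  rintro x ⟨hx1, hx2⟩ y ⟨hy1, hy2⟩ s t hs ht hst
  have hc := cos_concave2 hx1 hy1 hs ht hst
  have he := convexOn_exp.2 (Set.mem_univ x.re) (Set.mem_univ y.re) hs ht hst
  simp only [smul_eq_mul] at he
  have him : (s • x + t • y).im = s * x.im + t * y.im := by simp
  have hre : (s • x + t • y).re = s * x.re + t * y.re := by simp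
  refine ⟨?_, ?_⟩
  · rw [him]
    have := (convex_Ioo (-(Real.pi / 2)) (Real.pi / 2)) (abs_lt.1 hx1) (abs_lt.1 hy1) hs ht hst
    exact abs_lt.2 (by simpa using this)
  · rw [him, hre]
    have : s * Real.exp x.re + t * Real.exp y.re < s * (2 * Real.cos x.im) + t * (2 * Real.cos y.im) := by
      rcases hs.eq_or_lt with h | h
      · have : t = 1 := by linarith
        subst h; subst this; simpa using hy2
      · have h1 := mul_lt_mul_of_pos_left hx2 h
        have h2 := mul_le_mul_of_nonneg_left hy2.le ht
        linarith
    linarith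

lemma norm_one_sub_lt_iff (u : ℂ) : ‖1 - u‖ < 1 ↔ ‖u‖ ^ 2 < 2 * u.re := by
  have h1 : ‖1 - u‖ ^ 2 = 1 - 2 * u.re + ‖u‖ ^ 2 := by
    rw [← Complex.normSq_eq_norm_sq, ← Complex.normSq_eq_norm_sq, Complex.normSq_apply,
      Complex.normSq_apply]
    simp; ring
  have h2 : ‖1 - u‖ < 1 ↔ ‖1 - u‖ ^ 2 < 1 := by
    rw [sq_lt_one_iff₀ (norm_nonneg _)]
  rw [h2, h1]
  constructor <;> intro h <;> linarith

lemma norm_exp_iff (w : ℂ) : ‖1 - Complex.exp w‖ < 1 ↔ Real.exp w.re < 2 * Real.cos w.im := by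
  rw [norm_one_sub_lt_iff, Complex.norm_exp, Complex.exp_re]
  have := Real.exp_pos w.re
  constructor
  · intro h
    have : Real.exp w.re * Real.exp w.re < Real.exp w.re * (2 * Real.cos w.im) := by nlinarith
    exact lt_of_mul_lt_mul_left this (by positivity)
  · intro h; nlinarith

lemma re_pos_of_norm {u : ℂ} (h : ‖1 - u‖ < 1) : 0 < u.re := by
  have := (norm_one_sub_lt_iff u).1 h
  have := sq_nonneg ‖u‖
  linarith

lemma log_mem_DD {u : ℂ} (h : ‖1 - u‖ < 1) : Complex.log u ∈ DD := by
  have hr := re_pos_of_norm h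
  have h0 : u ≠ 0 := by rintro rfl; simp at hr
  refine ⟨?_, ?_⟩
  · rw [Complex.log_im]; exact Complex.abs_arg_lt_pi_div_two_iff.2 (Or.inl hr)
  · rw [← norm_exp_iff, Complex.exp_log h0]; exact h

lemma zero_mem_DD : (0 : ℂ) ∈ DD := by
  refine ⟨by simp [Real.pi_pos], by simp⟩

lemma one_sub_ball {z : ℂ} (hz : z ∈ ball (0 : ℂ) 1) : ‖1 - (1 - z)‖ < 1 := by
  simpa using hz

lemma subord_of {F H : ℂ → ℂ} {ρ : ℝ} (hH : DifferentiableOn ℂ H (ball (0 : ℂ) 1))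
    (h0 : H 0 = 0) (hD : ∀ z ∈ ball (0 : ℂ) 1, H z ∈ DD)
    (hF : ∀ z ∈ ball (0 : ℂ) 1, F z = Complex.exp (ρ * H z)) :
    Subord F (fun z => (1 - z) ^ (ρ : ℂ)) := by
  refine ⟨fun z => 1 - Complex.exp (H z), ?_, by simp [h0], ?_, ?_⟩
  · exact (differentiableOn_const _).sub hH.cexp
  · intro z hz
    rw [mem_ball_zero_iff, norm_exp_iff]
    exact (hD z hz).2
  · intro z hz
    have hi := abs_lt.1 (hD z hz).1
    have hp := Real.pi_pos
    simp only [sub_sub_cancel]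
    rw [hF z hz, Complex.cpow_def_of_ne_zero (Complex.exp_ne_zero _),
      Complex.log_exp (by linarith) (by linarith), mul_comm]

lemma diff_log_one_sub : DifferentiableOn ℂ (fun z : ℂ => Complex.log (1 - z)) (ball (0 : ℂ) 1) := by
  apply DifferentiableOn.clog
  · fun_prop
  · intro z hz
    exact Or.inl (re_pos_of_norm (one_sub_ball hz))

def KK (μ : ℝ) : Set ℂ := (fun d : ℂ => Complex.exp (μ * d)) '' DD

lemma KK_support {μ θ ψ x : ℝ} (hμ : 0 < μ) (hμ1 : μ ≤ 1) (hψ : |ψ| < Real.pi / 2)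
    (hx : Real.exp x < 2 * Real.cos ψ) (hθ : |θ| < Real.pi / 2) :
    Real.exp (μ * x) * Real.cos (μ * ψ - (1 + μ) * θ) <
      (2 * Real.cos θ) ^ μ * Real.cos θ := by
  have hp := Real.pi_pos
  have hc : 0 < Real.cos θ := Real.cos_pos_of_mem_Ioo ⟨(abs_lt.1 hθ).1.trans_le' (by linarith), (abs_lt.1 hθ).2⟩
  have hcψ : 0 < Real.cos ψ := by have := Real.exp_pos x; linarith
  have hpos : 0 < (2 * Real.cos θ) ^ μ * Real.cos θ := by positivity
  set η := (1 + μ) * θ - μ * ψ with hη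
  have hcos : Real.cos (μ * ψ - (1 + μ) * θ) = Real.cos η := by
    rw [← Real.cos_neg]; congr 1; ring
  rw [hcos]
  by_cases hc0 : Real.cos η ≤ 0
  · exact (mul_nonpos_of_nonneg_of_nonpos (Real.exp_pos _).le hc0).trans_lt hpos
  push Not at hc0
  rw [abs_lt] at hψ hθ
  have hη1 : η < 3 * Real.pi / 2 := by nlinarith
  have hη2 : -(3 * Real.pi / 2) < η := by nlinarith
  have hηa : |η| < Real.pi / 2 := by
    by_contra hcon
    push Not at hcon
    have : Real.cos |η| ≤ 0 := by
      apply Real.cos_nonpos_of_pi_div_two_le_of_le hcon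
      rw [abs_le]; constructor <;> linarith
    rw [Real.cos_abs] at this
    linarith
  have hm : 0 < 1 + μ := by linarith
  have hcv := cos_concave2 (a := ψ) (b := η) (s := μ / (1 + μ)) (t := 1 / (1 + μ))
    (abs_lt.2 hψ) hηa (by positivity) (by positivity) (by field_simp; ring)
  have hth : μ / (1 + μ) * ψ + 1 / (1 + μ) * η = θ := by rw [hη]; field_simp; ring
  rw [hth] at hcv
  have hgm := Real.geom_mean_le_arith_mean2_weighted (w₁ := μ / (1 + μ)) (w₂ := 1 / (1 + μ))
    (by positivity) (by positivity) hcψ.le hc0.le (by field_simp; ring)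
  have h1 := Real.rpow_le_rpow (by positivity) (hgm.trans hcv) hm.le
  rw [Real.mul_rpow (by positivity) (by positivity), ← Real.rpow_mul hcψ.le,
    ← Real.rpow_mul hc0.le, div_mul_cancel₀ _ hm.ne', div_mul_cancel₀ _ hm.ne', Real.rpow_one,
    Real.rpow_add hc, Real.rpow_one] at h1
  have h2 : Real.exp (μ * x) < (2 * Real.cos ψ) ^ μ := by
    rw [mul_comm, Real.exp_mul]
    exact Real.rpow_lt_rpow (Real.exp_pos _).le hx hμ
  calc Real.exp (μ * x) * Real.cos η < (2 * Real.cos ψ) ^ μ * Real.cos η :=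
        mul_lt_mul_of_pos_right h2 hc0
    _ = 2 ^ μ * (Real.cos ψ ^ μ * Real.cos η) := by
        rw [Real.mul_rpow (by norm_num) hcψ.le]; ring
    _ ≤ 2 ^ μ * (Real.cos θ * Real.cos θ ^ μ) := by gcongr
    _ = _ := by rw [Real.mul_rpow (by norm_num) hc.le]; ring

/-- the linear functional `Re (q e^{-iα})` -/
lemma re_rot (r φ α : ℝ) : (Complex.exp (r + φ * I)).re * Real.cos α +
    (Complex.exp (r + φ * I)).im * Real.sin α = Real.exp r * Real.cos (φ - α) := by
  rw [Complex.exp_re, Complex.exp_im, Real.cos_sub]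
  simp; ring

lemma KK_elim {μ : ℝ} {p : ℂ} (hp : p ∈ KK μ) : ∃ x ψ : ℝ, |ψ| < Real.pi / 2 ∧
    Real.exp x < 2 * Real.cos ψ ∧ p = Complex.exp ((μ * x : ℝ) + (μ * ψ : ℝ) * I) := by
  obtain ⟨d, ⟨h1, h2⟩, rfl⟩ := hp
  refine ⟨d.re, d.im, h1, h2, ?_⟩
  simp only
  congr 1
  apply Complex.ext <;> simp

lemma KK_re_pos {μ : ℝ} (hμ : 0 < μ) (hμ1 : μ ≤ 1) {p : ℂ} (hp : p ∈ KK μ) : 0 < p.re := by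
  obtain ⟨x, ψ, h1, h2, rfl⟩ := KK_elim hp
  have := Real.pi_pos
  rw [abs_lt] at h1
  have h3 := re_rot (μ * x) (μ * ψ) 0
  simp only [Real.cos_zero, Real.sin_zero, mul_one, mul_zero, add_zero, sub_zero] at h3
  rw [h3]
  apply mul_pos (Real.exp_pos _) (Real.cos_pos_of_mem_Ioo ⟨by nlinarith, by nlinarith⟩)

lemma KK_log {μ : ℝ} (hμ : 0 < μ) (hμ1 : μ ≤ 1) {p : ℂ} (hp : p ∈ KK μ) :
    Complex.log p / μ ∈ DD := by
  obtain ⟨d, hd, rfl⟩ := hp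
  have h1 := abs_lt.1 hd.1
  have := Real.pi_pos
  simp only
  rw [Complex.log_exp (by simp; nlinarith) (by simp; nlinarith)]
  rwa [mul_div_cancel_left₀ _ (by exact_mod_cast hμ.ne')]

lemma KK_convex {μ : ℝ} (hμ : 0 < μ) (hμ1 : μ ≤ 1) : Convex ℝ (KK μ) := by
  intro p hp q hq s t hs ht hst
  have hpi := Real.pi_pos
  -- general principle
  have key : ∀ α C : ℝ, (∀ p ∈ KK μ, p.re * Real.cos α + p.im * Real.sin α < C) →
      (s • p + t • q).re * Real.cos α + (s • p + t • q).im * Real.sin α < C := by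
    intro α C h
    have h1 := h p hp
    have h2 := h q hq
    have := (convex_Iio C) (x := p.re * Real.cos α + p.im * Real.sin α) h1 (y := q.re * Real.cos α + q.im * Real.sin α) h2 hs ht hst
    simp only [smul_eq_mul, Set.mem_Iio] at this
    simp only [add_re, add_im, real_smul, mul_re, mul_im, ofReal_re, ofReal_im]
    linarith
  set w := s • p + t • q with hw
  have hre : 0 < w.re := by
    have := key Real.pi 0 (fun p hp => by simpa using KK_re_pos hμ hμ1 hp)
    simpa using this
  have hw0 : w ≠ 0 := by intro h; rw [h] at hre; simp at hre
  have hwexp : w = Complex.exp ((Real.log ‖w‖ : ℝ) + (w.arg : ℝ) * I) := by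
    have := Complex.exp_log hw0
    rw [Complex.log] at this
    exact this.symm
  have harg := abs_lt.1 (Complex.abs_arg_lt_pi_div_two_iff.2 (Or.inl hre))
  have hn : 0 < ‖w‖ := norm_pos_iff.2 hw0
  have hrot : ∀ α, w.re * Real.cos α + w.im * Real.sin α = ‖w‖ * Real.cos (w.arg - α) := by
    intro α
    have := re_rot (Real.log ‖w‖) w.arg α
    rwa [← hwexp, Real.exp_log hn] at this
  have hup : w.arg < μ * (Real.pi / 2) := by
    have h := key (Real.pi / 2 + μ * (Real.pi / 2)) 0 (fun p hp => by
      obtain ⟨x, ψ, h1, h2, rfl⟩ := KK_elim hp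
      rw [abs_lt] at h1
      rw [re_rot]
      apply mul_neg_of_pos_of_neg (Real.exp_pos _)
      rw [← Real.cos_neg]
      apply Real.cos_neg_of_pi_div_two_lt_of_lt <;> nlinarith)
    rw [hrot] at h
    by_contra hcon
    push Not at hcon
    have : 0 ≤ Real.cos (w.arg - (Real.pi / 2 + μ * (Real.pi / 2))) := by
      apply Real.cos_nonneg_of_mem_Icc; constructor <;> nlinarith
    nlinarith
  have hlo : -(μ * (Real.pi / 2)) < w.arg := by
    have h := key (-(Real.pi / 2 + μ * (Real.pi / 2))) 0 (fun p hp => by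
      obtain ⟨x, ψ, h1, h2, rfl⟩ := KK_elim hp
      rw [abs_lt] at h1
      rw [re_rot]
      apply mul_neg_of_pos_of_neg (Real.exp_pos _)
      apply Real.cos_neg_of_pi_div_two_lt_of_lt <;> nlinarith)
    rw [hrot] at h
    by_contra hcon
    push Not at hcon
    have : 0 ≤ Real.cos (w.arg - -(Real.pi / 2 + μ * (Real.pi / 2))) := by
      apply Real.cos_nonneg_of_mem_Icc; constructor <;> nlinarith
    nlinarith
  set θ := w.arg / μ with hθ
  have hwθ : w.arg = μ * θ := by rw [hθ]; field_simp
  have hθa : |θ| < Real.pi / 2 := by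
    rw [abs_lt]; rw [hwθ] at hup hlo
    constructor <;> nlinarith
  have h := key ((1 + μ) * θ) ((2 * Real.cos θ) ^ μ * Real.cos θ) (fun p hp => by
      obtain ⟨x, ψ, h1, h2, rfl⟩ := KK_elim hp
      rw [re_rot]
      exact KK_support hμ hμ1 h1 h2 hθa)
  have hc : 0 < Real.cos θ := Real.cos_pos_of_mem_Ioo ⟨(abs_lt.1 hθa).1.trans_le' (by linarith), (abs_lt.1 hθa).2⟩
  rw [hrot, hwθ, show μ * θ - (1 + μ) * θ = -θ by ring, Real.cos_neg] at h
  have h' := lt_of_mul_lt_mul_right h hc.le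
  refine ⟨((Real.log ‖w‖ / μ : ℝ) : ℂ) + (θ : ℂ) * I, ⟨by simpa using hθa, ?_⟩, ?_⟩
  · simp only [add_re, add_im, ofReal_re, ofReal_im, mul_re, mul_im, I_re, I_im]
    have e : Real.exp (Real.log ‖w‖ / μ) = ‖w‖ ^ (1 / μ) := by
      rw [Real.rpow_def_of_pos hn]; congr 1; ring
    have : ‖w‖ ^ (1 / μ) < ((2 * Real.cos θ) ^ μ) ^ (1 / μ) :=
      Real.rpow_lt_rpow hn.le h' (by positivity)
    rw [← Real.rpow_mul (by positivity), mul_one_div_cancel hμ.ne', Real.rpow_one, ← e] at this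
    simpa using this
  · have hμc : (μ : ℂ) ≠ 0 := by exact_mod_cast hμ.ne'
    simp only
    conv_rhs => rw [hwexp, hwθ]
    congr 1
    push_cast
    field_simp

lemma abel_sum (c : ℕ → ℝ) (x : ℕ → ℂ) (m : ℕ) :
    ∑ j ∈ Finset.range m, (c j - c (j + 1)) • (∑ k ∈ Finset.range (j + 1), x k) =
      ∑ k ∈ Finset.range m, (c k : ℂ) * x k - (c m : ℂ) * ∑ k ∈ Finset.range m, x k := by
  induction m with
  | zero => simp
  | succ m ih =>
    rw [Finset.sum_range_succ, ih, Finset.sum_range_succ x m,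
      Finset.sum_range_succ (fun k => (c k : ℂ) * x k) m]
    simp only [real_smul]
    push_cast
    ring

lemma abel_mem {K : Set ℂ} (hK : Convex ℝ K) (c : ℕ → ℝ) (x : ℕ → ℂ) (n : ℕ)
    (hc0 : c 0 = 1) (hanti : ∀ k < n, c (k + 1) ≤ c k) (hn : 0 ≤ c n)
    (hS : ∀ j ≤ n, ∑ k ∈ Finset.range (j + 1), x k ∈ K) :
    ∑ k ∈ Finset.range (n + 1), (c k : ℂ) * x k ∈ K := by
  set c' : ℕ → ℝ := fun k => if k ≤ n then c k else 0 with hc'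
  have h1 : ∑ k ∈ Finset.range (n + 1), (c k : ℂ) * x k =
      ∑ k ∈ Finset.range (n + 1), (c' k : ℂ) * x k := by
    apply Finset.sum_congr rfl
    intro k hk
    have : k ≤ n := by simpa [Nat.lt_succ_iff] using hk
    simp [hc', this]
  have h2 := abel_sum c' x (n + 1)
  have h3 : c' (n + 1) = 0 := by simp [hc']
  rw [h3] at h2
  simp only [ofReal_zero, zero_mul, sub_zero] at h2
  rw [h1, ← h2]
  apply hK.sum_mem
  · intro j hj
    have hj' : j ≤ n := by simpa [Nat.lt_succ_iff] using hj
    rcases hj'.eq_or_lt with rfl | hlt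
    · simpa [hc'] using hn
    · have := hanti j hlt
      have h5 : j + 1 ≤ n := hlt
      simp only [hc', hj', h5, if_true]; linarith
  · rw [Finset.sum_range_sub', h3]; simp [hc', hc0]
  · intro j hj
    exact hS j (by simpa [Nat.lt_succ_iff] using hj)

noncomputable def aa (μ : ℝ) (k : ℕ) : ℝ := poch μ k / (Nat.factorial k : ℝ)

lemma poch_succ (x : ℝ) (k : ℕ) : poch x (k + 1) = poch x k * (x + k) := by
  simp [poch, Finset.prod_range_succ]

lemma poch_pos {x : ℝ} (hx : 0 < x) (k : ℕ) : 0 < poch x k :=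
  Finset.prod_pos (fun i _ => by positivity)

lemma aa_zero (μ : ℝ) : aa μ 0 = 1 := by simp [aa, poch]

lemma aa_pos {μ : ℝ} (hμ : 0 < μ) (k : ℕ) : 0 < aa μ k :=
  div_pos (poch_pos hμ k) (by positivity)

lemma aa_succ (μ : ℝ) (k : ℕ) : ((k : ℝ) + 1) * aa μ (k + 1) = (μ + k) * aa μ k := by
  have : (Nat.factorial k : ℝ) ≠ 0 := by positivity
  rw [aa, aa, poch_succ, Nat.factorial_succ]
  push_cast
  field_simp

lemma aa_anti {μ : ℝ} (hμ : 0 < μ) (hμ1 : μ ≤ 1) (k : ℕ) : aa μ (k + 1) ≤ aa μ k := by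
  have h1 := aa_succ μ k
  have h2 := aa_pos hμ k
  have : ((k : ℝ) + 1) * aa μ (k + 1) ≤ (k + 1) * aa μ k := by
    rw [h1]; apply mul_le_mul_of_nonneg_right _ h2.le; linarith
  exact le_of_mul_le_mul_left this (by positivity)

lemma ode {𝕜 : Type*} [NontriviallyNormedField 𝕜] (a : ℕ → 𝕜) (m : 𝕜)
    (ha : ∀ k : ℕ, ((k : 𝕜) + 1) * a (k + 1) = (m + k) * a k) (n : ℕ) (z : 𝕜) :
    ∃ d, HasDerivAt (fun z => ∑ k ∈ Finset.range (n + 1), a k * z ^ k) d z ∧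
      (1 - z) * d = m * (∑ k ∈ Finset.range (n + 1), a k * z ^ k) - (m + n) * a n * z ^ n := by
  induction n with
  | zero => exact ⟨0, by simpa using hasDerivAt_const z (a 0), by simp⟩
  | succ n ih =>
    obtain ⟨d, h1, h2⟩ := ih
    refine ⟨d + a (n + 1) * (((n + 1 : ℕ) : 𝕜) * z ^ n), ?_, ?_⟩
    · have := h1.add ((hasDerivAt_pow (n + 1) z).const_mul (a (n + 1)))
      simp only [Finset.sum_range_succ _ (n + 1)]
      exact this
    · rw [mul_add, h2, Finset.sum_range_succ _ (n + 1)]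
      have := ha n
      push_cast
      linear_combination (1 - z) * z ^ n * this - z ^ n * (1 - z) * this + z ^ n * this

noncomputable def ss (μ : ℝ) (n : ℕ) (z : ℂ) : ℂ := ∑ k ∈ Finset.range (n + 1), (aa μ k : ℂ) * z ^ k
noncomputable def sr (μ : ℝ) (n : ℕ) (z : ℝ) : ℝ := ∑ k ∈ Finset.range (n + 1), aa μ k * z ^ k

lemma ss_ode (μ : ℝ) (n : ℕ) (z : ℂ) : ∃ d, HasDerivAt (ss μ n) d z ∧
    (1 - z) * d = μ * ss μ n z - (μ + n) * aa μ n * z ^ n :=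
  ode (fun k => (aa μ k : ℂ)) μ (fun k => by exact_mod_cast aa_succ μ k) n z

lemma sr_ode (μ : ℝ) (n : ℕ) (z : ℝ) : ∃ d, HasDerivAt (sr μ n) d z ∧
    (1 - z) * d = μ * sr μ n z - (μ + n) * aa μ n * z ^ n :=
  ode (fun k => aa μ k) μ (aa_succ μ) n z

lemma ss_zero (μ : ℝ) (n : ℕ) : ss μ n 0 = 1 := by
  simp [ss, Finset.sum_range_succ', aa_zero]

lemma sr_zero (μ : ℝ) (n : ℕ) : sr μ n 0 = 1 := by
  simp [sr, Finset.sum_range_succ', aa_zero]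

lemma ss_norm {μ : ℝ} (hμ : 0 < μ) (n : ℕ) (z : ℂ) : ‖ss μ n z‖ ≤ sr μ n ‖z‖ := by
  refine (norm_sum_le _ _).trans (le_of_eq ?_)
  apply Finset.sum_congr rfl
  intro k _
  rw [norm_mul, norm_pow, Complex.norm_real, Real.norm_of_nonneg (aa_pos hμ k).le]

lemma sr_pos {μ : ℝ} (hμ : 0 < μ) (n : ℕ) {r : ℝ} (hr : 0 ≤ r) : 0 < sr μ n r := by
  rw [sr, Finset.sum_range_succ']
  have : 0 ≤ ∑ k ∈ Finset.range n, aa μ (k + 1) * r ^ (k + 1) :=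
    Finset.sum_nonneg (fun k _ => mul_nonneg (aa_pos hμ _).le (by positivity))
  simp only [aa_zero, pow_zero]
  linarith

lemma stepA {μ : ℝ} (hμ : 0 < μ) (hμ1 : μ ≤ 1) (n : ℕ) {z : ℂ} (hz : z ∈ ball (0 : ℂ) 1) :
    ‖1 - (1 - z) * ss μ n z‖ < 1 := by
  have h := abel_mem (convex_ball (1 : ℂ) 1) (aa μ) (fun k => (1 - z) * z ^ k) n (aa_zero μ)
    (fun k _ => aa_anti hμ hμ1 k) (aa_pos hμ n).le (fun j _ => by
      have : ∑ k ∈ Finset.range (j + 1), (1 - z) * z ^ k = 1 - z ^ (j + 1) := by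
        rw [← Finset.mul_sum, mul_neg_geom_sum]
      rw [this, mem_ball, dist_eq_norm]
      simp only [sub_sub_cancel_left, norm_neg, norm_pow]
      exact pow_lt_one₀ (norm_nonneg _) (by simpa using hz) (by omega))
  rw [mem_ball, dist_eq_norm, norm_sub_rev] at h
  have e : (1 - z) * ss μ n z = ∑ k ∈ Finset.range (n + 1), (aa μ k : ℂ) * ((1 - z) * z ^ k) := by
    rw [ss, Finset.mul_sum]
    exact Finset.sum_congr rfl (fun k _ => by ring)
  rw [e]
  exact h

noncomputable def HH (μ : ℝ) (n : ℕ) (z : ℂ) : ℂ :=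
  (1 - 1 / μ) * Complex.log (1 - z) + (1 / μ) * Complex.log ((1 - z) * ss μ n z)

lemma HH_zero (μ : ℝ) (n : ℕ) : HH μ n 0 = 0 := by simp [HH, ss_zero]

lemma exp_mul_HH {μ : ℝ} (hμ : 0 < μ) (hμ1 : μ ≤ 1) (n : ℕ) {z : ℂ} (hz : z ∈ ball (0 : ℂ) 1) :
    Complex.exp (μ * HH μ n z) = (1 - z) ^ (μ : ℂ) * ss μ n z := by
  have hA := re_pos_of_norm (stepA hμ hμ1 n hz)
  have hA0 : (1 - z) * ss μ n z ≠ 0 := by intro h; rw [h] at hA; simp at hA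
  have hz0 : 1 - z ≠ 0 := left_ne_zero_of_mul hA0
  have hμc : (μ : ℂ) ≠ 0 := by exact_mod_cast hμ.ne'
  have : (μ : ℂ) * HH μ n z = Complex.log (1 - z) * μ - Complex.log (1 - z) +
      Complex.log ((1 - z) * ss μ n z) := by
    rw [HH]; field_simp
  rw [this, Complex.exp_add, Complex.exp_sub, Complex.exp_log hA0, Complex.exp_log hz0,
    Complex.cpow_def_of_ne_zero hz0]
  field_simp

lemma norm_exp_HH {μ : ℝ} (hμ : 0 < μ) (hμ1 : μ ≤ 1) (n : ℕ) {z : ℂ} (hz : z ∈ ball (0 : ℂ) 1) :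
    ‖Complex.exp (HH μ n z)‖ = ‖1 - z‖ * ‖ss μ n z‖ ^ (1 / μ) := by
  have hA := re_pos_of_norm (stepA hμ hμ1 n hz)
  have hA0 : (1 - z) * ss μ n z ≠ 0 := by intro h; rw [h] at hA; simp at hA
  have hz0 : 0 < ‖1 - z‖ := norm_pos_iff.2 (left_ne_zero_of_mul hA0)
  have hs0 : 0 < ‖ss μ n z‖ := norm_pos_iff.2 (right_ne_zero_of_mul hA0)
  have h1 : (HH μ n z).re = Real.log ‖1 - z‖ + Real.log ‖ss μ n z‖ * (1 / μ) := by
    have : HH μ n z = ((1 - 1 / μ : ℝ) : ℂ) * Complex.log (1 - z) +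
        ((1 / μ : ℝ) : ℂ) * Complex.log ((1 - z) * ss μ n z) := by rw [HH]; push_cast; rfl
    rw [this, add_re, re_ofReal_mul, re_ofReal_mul, Complex.log_re, Complex.log_re, norm_mul,
      Real.log_mul hz0.ne' hs0.ne']
    ring
  rw [Complex.norm_exp, h1, Real.exp_add, Real.exp_log hz0, Real.rpow_def_of_pos hs0]

lemma HH_deriv {μ : ℝ} (hμ : 0 < μ) (hμ1 : μ ≤ 1) (n : ℕ) {z : ℂ} (hz : z ∈ ball (0 : ℂ) 1) :
    HasDerivAt (HH μ n) (-((μ + n) * aa μ n * z ^ n / (μ * ((1 - z) * ss μ n z)))) z := by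
  have hA := re_pos_of_norm (stepA hμ hμ1 n hz)
  have hA0 : (1 - z) * ss μ n z ≠ 0 := by intro h; rw [h] at hA; simp at hA
  have hz0 : 1 - z ≠ 0 := left_ne_zero_of_mul hA0
  have hs0 : ss μ n z ≠ 0 := right_ne_zero_of_mul hA0
  have hμc : (μ : ℂ) ≠ 0 := by exact_mod_cast hμ.ne'
  obtain ⟨d, hd1, hd2⟩ := ss_ode μ n z
  have h1 : HasDerivAt (fun z : ℂ => 1 - z) (-1) z := by
    simpa using (hasDerivAt_id z).const_sub 1
  have h2 := h1.clog (Or.inl (re_pos_of_norm (one_sub_ball hz)))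
  have h3 := (h1.mul hd1).clog (Or.inl hA)
  have h4 := (h2.const_mul (1 - 1 / (μ : ℂ))).add (h3.const_mul (1 / (μ : ℂ)))
  refine HasDerivAt.congr_deriv (f := HH μ n) h4 ?_
  simp only [Pi.mul_apply]
  field_simp
  linear_combination hd2

lemma normbound {μ : ℝ} (hμ : 0 < μ) (hμ1 : μ ≤ 1) (n : ℕ) {z : ℂ} (hz : z ∈ ball (0 : ℂ) 1) :
    ‖1 - Complex.exp (HH μ n z)‖ < 1 := by
  have hr : ‖z‖ < 1 := by simpa using hz
  set r := ‖z‖ with hrdef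
  have hr0 : 0 ≤ r := norm_nonneg z
  have hball : ∀ t ∈ Set.Icc (0 : ℝ) 1, (t : ℂ) * z ∈ ball (0 : ℂ) 1 := by
    intro t ht
    rw [mem_ball_zero_iff, norm_mul, Complex.norm_real, Real.norm_of_nonneg ht.1]
    have := ht.2
    nlinarith [norm_nonneg z]
  -- complex derivative
  have hf : ∀ t ∈ Set.Icc (0 : ℝ) 1, HasDerivAt (fun t : ℝ => 1 - Complex.exp (HH μ n (t * z)))
      (-(Complex.exp (HH μ n (t * z)) * (-((μ + n) * aa μ n * (t * z) ^ n /
        (μ * ((1 - t * z) * ss μ n (t * z)))) * z))) t := by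
    intro t ht
    have h1 : HasDerivAt (fun t : ℝ => (t : ℂ) * z) z t := by
      simpa using (Complex.ofRealCLM.hasDerivAt (x := t)).mul_const z
    have h2 := (HH_deriv hμ hμ1 n (hball t ht)).comp t h1
    exact h2.cexp.const_sub 1
  -- real majorant
  have hB : ∀ t ∈ Set.Icc (0 : ℝ) 1, HasDerivAt
      (fun t : ℝ => 1 - (1 - t * r) * sr μ n (t * r) ^ (1 / μ))
      ((μ + n) * aa μ n * (t * r) ^ n / μ * sr μ n (t * r) ^ (1 / μ - 1) * r) t := by
    intro t ht
    have hp := sr_pos hμ n (r := t * r) (mul_nonneg ht.1 hr0)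
    obtain ⟨d, hd1, hd2⟩ := sr_ode μ n (t * r)
    have h1 : HasDerivAt (fun t : ℝ => t * r) r t := by
      simpa using (hasDerivAt_id t).mul_const r
    have h2 := hd1.comp t h1
    have h3 := h2.rpow_const (p := 1 / μ) (Or.inl hp.ne')
    have h4 := ((h1.const_sub 1).mul h3).const_sub 1
    refine HasDerivAt.congr_deriv
      (f := fun t : ℝ => 1 - (1 - t * r) * sr μ n (t * r) ^ (1 / μ)) h4 ?_
    simp only [Function.comp]
    have e : sr μ n (t * r) ^ (1 / μ) = sr μ n (t * r) ^ (1 / μ - 1) * sr μ n (t * r) := by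
      rw [← Real.rpow_add_one hp.ne']; congr 1; ring
    rw [e]
    generalize sr μ n (t * r) ^ (1 / μ - 1) = Q
    generalize sr μ n (t * r) = S at hd2 ⊢
    field_simp
    linear_combination -(r * Q) * hd2
  have hmain := image_norm_le_of_norm_deriv_right_le_deriv_boundary'
    (f := fun t : ℝ => 1 - Complex.exp (HH μ n (t * z))) (a := 0) (b := 1)
    (B := fun t : ℝ => 1 - (1 - t * r) * sr μ n (t * r) ^ (1 / μ))
    (fun t ht => (hf t ht).continuousAt.continuousWithinAt)
    (fun t ht => (hf t ⟨ht.1, ht.2.le⟩).hasDerivWithinAt)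
    (by simp [HH_zero, sr_zero])
    (fun t ht => (hB t ht).continuousAt.continuousWithinAt)
    (fun t ht => (hB t ⟨ht.1, ht.2.le⟩).hasDerivWithinAt)
    (by
      intro t ht
      have ht' : t ∈ Set.Icc (0 : ℝ) 1 := ⟨ht.1, ht.2.le⟩
      have hb := hball t ht'
      have hA := re_pos_of_norm (stepA hμ hμ1 n hb)
      have hA0 : (1 - t * z) * ss μ n (t * z) ≠ 0 := by intro h; rw [h] at hA; simp at hA
      have hz0 : 0 < ‖1 - t * z‖ := norm_pos_iff.2 (left_ne_zero_of_mul hA0)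
      have hs0 : 0 < ‖ss μ n (t * z)‖ := norm_pos_iff.2 (right_ne_zero_of_mul hA0)
      have hn : ‖(t : ℂ) * z‖ = t * r := by
        rw [norm_mul, Complex.norm_real, Real.norm_of_nonneg ht.1]
      have hm : ‖(μ : ℂ) + n‖ = μ + n := by
        have : (μ : ℂ) + n = ((μ + n : ℝ) : ℂ) := by push_cast; rfl
        rw [this, Complex.norm_real, Real.norm_of_nonneg (by positivity)]
      rw [norm_neg, norm_mul, norm_exp_HH hμ hμ1 n hb, norm_mul, norm_neg, norm_div, norm_mul,
        norm_mul, norm_mul, norm_mul, norm_pow, hn, hm, Complex.norm_real, Complex.norm_real,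
        Real.norm_of_nonneg (aa_pos hμ n).le, Real.norm_of_nonneg hμ.le]
      have e : ‖ss μ n (t * z)‖ ^ (1 / μ) =
          ‖ss μ n (t * z)‖ ^ (1 / μ - 1) * ‖ss μ n (t * z)‖ := by
        rw [← Real.rpow_add_one hs0.ne']; congr 1; ring
      have hle : ‖ss μ n (t * z)‖ ^ (1 / μ - 1) ≤ sr μ n (t * r) ^ (1 / μ - 1) := by
        apply Real.rpow_le_rpow hs0.le
        · rw [← hn]; exact ss_norm hμ n _
        · rw [sub_nonneg, le_div_iff₀ hμ]; linarith
      have ha := (aa_pos hμ n).le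
      have ht0 := ht.1
      calc _ = (μ + n) * aa μ n * (t * r) ^ n / μ * ‖ss μ n (t * z)‖ ^ (1 / μ - 1) * r := by
            rw [e, ← hrdef]
            generalize ‖ss μ n (t * z)‖ ^ (1 / μ - 1) = Q
            field_simp
        _ ≤ _ := by gcongr)
    (Set.right_mem_Icc.2 zero_le_one)
  simp only [ofReal_one, one_mul] at hmain
  have : 0 < (1 - r) * sr μ n r ^ (1 / μ) :=
    mul_pos (by linarith) (Real.rpow_pos_of_pos (sr_pos hμ n hr0) _)
  linarith

lemma HH_mem {μ : ℝ} (hμ : 0 < μ) (hμ1 : μ ≤ 1) (n : ℕ) {z : ℂ} (hz : z ∈ ball (0 : ℂ) 1) :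
    HH μ n z ∈ DD := by
  have hd : DifferentiableOn ℂ (HH μ n) (ball (0 : ℂ) 1) := fun z hz =>
    (HH_deriv hμ hμ1 n hz).differentiableAt.differentiableWithinAt
  have hsl : ∀ z ∈ ball (0 : ℂ) 1, Complex.exp (HH μ n z) ∈ slitPlane := fun z hz =>
    Or.inl (re_pos_of_norm (normbound hμ hμ1 n hz))
  have heq : Set.EqOn (fun z => Complex.log (Complex.exp (HH μ n z))) (HH μ n)
      (ball (0 : ℂ) 1) := by
    apply isOpen_ball.eqOn_of_deriv_eq (convex_ball _ _).isPreconnected (hd.cexp.clog hsl) hd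
      _ (mem_ball_self one_pos)
    · simp [HH_zero]
    · intro w hw
      have h1 := (HH_deriv hμ hμ1 n hw)
      have h2 := h1.cexp.clog (hsl w hw)
      rw [h1.deriv, h2.deriv, mul_div_cancel_left₀ _ (Complex.exp_ne_zero _)]
  rw [← heq hz]
  exact log_mem_DD (normbound hμ hμ1 n hz)

lemma cesB_pos {b c : ℝ} (hc : 0 < c) (hb : c ≤ b) (k : ℕ) : 0 < cesB b c k := by
  cases k with
  | zero => simp [cesB]
  | succ k =>
    have h1 := poch_pos hc (k + 1)
    have h2 := poch_pos (hc.trans_le hb) (k + 1)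
    have h3 : 0 < 1 + b - c := by linarith
    have h4 : 0 < b := by linarith
    simp only [cesB]; positivity

lemma cesB_mono {b c : ℝ} (hc : 0 < c) (hb : c ≤ b) (hb2 : 2 * c - 1 ≤ b) (k : ℕ) :
    cesB b c k ≤ cesB b c (k + 1) := by
  have h4 : 0 < b := by linarith
  cases k with
  | zero =>
    simp only [cesB, poch, zero_add, Finset.prod_range_one, Nat.cast_zero, add_zero]
    have : b / c * (1 + b - c) / b = (1 + b - c) / c := by field_simp
    rw [this, le_div_iff₀ hc]; linarith
  | succ k =>
    have h1 := poch_pos hc (k + 1)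
    have h2 := poch_pos (hc.trans_le hb) (k + 1)
    have h3 : 0 < 1 + b - c := by linarith
    have hp := cesB_pos hc hb (k + 1)
    have e : cesB b c (k + 1 + 1) = cesB b c (k + 1) * ((b + (k + 1 : ℕ)) / (c + (k + 1 : ℕ))) := by
      simp only [cesB]
      rw [poch_succ b (k + 1), poch_succ c (k + 1)]
      have : c + ((k + 1 : ℕ) : ℝ) ≠ 0 := by positivity
      field_simp
    rw [e]
    apply le_mul_of_one_le_right hp.le
    rw [one_le_div (by positivity)]; linarith

lemma sigma_zero {b c μ : ℝ} (hc : 0 < c) (hb : c ≤ b) (n : ℕ) : sigmaMu b c μ n 0 = 1 := by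
  have := (cesB_pos hc hb n).ne'
  simp [sigmaMu, Finset.sum_range_succ', poch, this]

lemma sigma_mem {b c μ : ℝ} (hμ : 0 < μ) (hμ1 : μ ≤ 1) (hc : 0 < c) (hb : c ≤ b)
    (hb2 : 2 * c - 1 ≤ b) (n : ℕ) {z : ℂ} (hz : z ∈ ball (0 : ℂ) 1) :
    (1 - z) ^ (μ : ℂ) * sigmaMu b c μ n z ∈ KK μ := by
  have hp := cesB_pos hc hb n
  have h := abel_mem (KK_convex hμ hμ1) (fun k => cesB b c (n - k) / cesB b c n)
    (fun k => (1 - z) ^ (μ : ℂ) * ((aa μ k : ℂ) * z ^ k)) n (by simp [hp.ne'])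
    (fun k hk => by
      have h1 := cesB_mono hc hb hb2 (n - (k + 1))
      rw [show n - (k + 1) + 1 = n - k by omega] at h1
      gcongr)
    (div_pos (cesB_pos hc hb _) hp).le
    (fun j _ => by
      rw [← Finset.mul_sum]
      exact ⟨HH μ j z, HH_mem hμ hμ1 j hz, exp_mul_HH hμ hμ1 j hz⟩)
  convert h using 1
  rw [sigmaMu, Finset.mul_sum]
  refine Finset.sum_congr rfl (fun k _ => ?_)
  rw [aa]; push_cast; ring

/-- If `F ≺ (1-z)^μ` with `0 < μ ≤ ρ ≤ 1` then `F ≺ (1-z)^ρ`; consequently,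
for `b ≥ max{c, 2c-1} > 0`, `(1-z)^ρ σ_n^{(b-1,c)}(f_μ, z) ≺ (1-z)^ρ`. -/
theorem stmt11 (μ ρ : ℝ) (hμ : 0 < μ) (hμρ : μ ≤ ρ) (hρ : ρ ≤ 1) :
    (∀ F : ℂ → ℂ, Subord F (fun z => (1 - z) ^ (μ : ℂ)) →
        Subord F (fun z => (1 - z) ^ (ρ : ℂ))) ∧
    (∀ b c : ℝ, b ≥ max c (2 * c - 1) → 0 < max c (2 * c - 1) → ∀ n : ℕ,
        Subord (fun z => (1 - z) ^ (ρ : ℂ) * sigmaMu b c μ n z)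
          (fun z => (1 - z) ^ (ρ : ℂ))) 
  := by
  have hρ0 : 0 < ρ := hμ.trans_le hμρ
  have hμ1 : μ ≤ 1 := hμρ.trans hρ
  have hρc : (ρ : ℂ) ≠ 0 := by exact_mod_cast hρ0.ne'
  have hμc : (μ : ℂ) ≠ 0 := by exact_mod_cast hμ.ne'
  have hcomb : ∀ x ∈ DD, ∀ y ∈ DD, ((ρ - μ) / ρ : ℂ) * x + (μ / ρ : ℂ) * y ∈ DD := by
    intro x hx y hy
    have := DD_convex hx hy (a := (ρ - μ) / ρ) (b := μ / ρ)
      (div_nonneg (by linarith) hρ0.le) (by positivity) (by field_simp; ring)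
    simpa using this
  refine ⟨?_, ?_⟩
  · rintro F ⟨ω, hω, hω0, hωb, hF⟩
    have hmaps : Set.MapsTo ω (ball (0 : ℂ) 1) (ball (0 : ℂ) 1) := hωb
    refine subord_of (H := fun z => (μ / ρ : ℂ) * Complex.log (1 - ω z)) ?_ ?_ ?_ ?_
    · exact (diff_log_one_sub.comp hω hmaps).const_mul _
    · simp [hω0]
    · intro z hz
      have := hcomb 0 zero_mem_DD _ (log_mem_DD (one_sub_ball (hωb z hz)))
      simpa using this
    · intro z hz
      have hr := re_pos_of_norm (one_sub_ball (hωb z hz))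
      have h0 : 1 - ω z ≠ 0 := by intro h; rw [h] at hr; simp at hr
      rw [hF z hz]
      simp only
      rw [Complex.cpow_def_of_ne_zero h0]
      congr 1
      field_simp
  · intro b c hb hm n
    have hb1 : c ≤ b := (le_max_left _ _).trans hb
    have hb2 : 2 * c - 1 ≤ b := (le_max_right _ _).trans hb
    have hc : 0 < c := by
      rcases lt_max_iff.1 hm with h | h <;> linarith
    have hmem := fun (z : ℂ) (hz : z ∈ ball (0 : ℂ) 1) =>
      sigma_mem hμ hμ1 hc hb1 hb2 n hz
    refine subord_of (H := fun z => ((ρ - μ) / ρ : ℂ) * Complex.log (1 - z) +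
      (μ / ρ : ℂ) * (Complex.log ((1 - z) ^ (μ : ℂ) * sigmaMu b c μ n z) / μ)) ?_ ?_ ?_ ?_
    · refine (diff_log_one_sub.const_mul _).add (DifferentiableOn.const_mul ?_ _)
      refine DifferentiableOn.div_const ?_ _
      refine DifferentiableOn.clog ?_ (fun z hz => Or.inl (KK_re_pos hμ hμ1 (hmem z hz)))
      refine DifferentiableOn.mul ?_ ?_
      · refine DifferentiableOn.cpow (by fun_prop) (by fun_prop) ?_
        intro z hz
        exact Or.inl (re_pos_of_norm (one_sub_ball hz))
      · unfold sigmaMu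
        fun_prop
    · simp [sigma_zero hc hb1]
    · intro z hz
      exact hcomb _ (log_mem_DD (one_sub_ball hz)) _ (KK_log hμ hμ1 (hmem z hz))
    · intro z hz
      have hr := re_pos_of_norm (one_sub_ball hz)
      have h0 : 1 - z ≠ 0 := by intro h; rw [h] at hr; simp at hr
      have hr2 := KK_re_pos hμ hμ1 (hmem z hz)
      have h2 : (1 - z) ^ (μ : ℂ) * sigmaMu b c μ n z ≠ 0 := by
        intro h; rw [h] at hr2; simp at hr2
      have e : (ρ : ℂ) * (((ρ - μ) / ρ : ℂ) * Complex.log (1 - z) +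
          (μ / ρ : ℂ) * (Complex.log ((1 - z) ^ (μ : ℂ) * sigmaMu b c μ n z) / μ)) =
          Complex.log (1 - z) * (ρ - μ) +
            Complex.log ((1 - z) ^ (μ : ℂ) * sigmaMu b c μ n z) := by
        field_simp
      rw [e, Complex.exp_add, Complex.exp_log h2, ← Complex.cpow_def_of_ne_zero h0, ← mul_assoc,
        ← Complex.cpow_add _ _ h0, sub_add_cancel]
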